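/- Let ξ = −8 and define f : ℂ∖{0} → ℂ by f(z) = (1/2)(z − 1/z)·(ξ + (z + 1/z)² + 2 − (z + 1/z)). Then the set { z ∈ ℝ : z ≠ 0 and f′(z) = 0 } consists of exactly three points: the point −1 together with two points ξ₂, ξ₁ satisfying 0 < ξ₂ < 1 < ξ₁ and ξ₁·ξ₂ = 1. -/

import Mathlib

/-!
With `s = z + 1/z` one has `2 z f'(z) = 3 s³ - 2 s² - 14 s + 4 = (s + 2) (3 s² - 8 s + 2)` for
`ξ = -8` (`deriv_phase`). A real `z ≠ 0` satisfies `|s| ≥ 2`. The root `s = -2` gives `z = -1`;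
of the roots `(4 ± √10) / 3` of the quadratic factor, the smaller lies in `(-2, 2)` and gives no
real `z`, while the larger exceeds `2` and gives two positive reciprocal solutions.
-/

/-- The phase function of the defocusing Hirota equation with α = β = 1. -/
noncomputable def phase (ξ : ℝ) (z : ℂ) : ℂ :=
  (1 / 2) * (z - 1 / z) * ((ξ : ℂ) + (z + 1 / z) ^ 2 + 2 - (z + 1 / z))

/-- The factor `(z + 1)² / z` is `s + 2`, and the last factor is `z² (3 s² - 8 s + 2)`, where
`s = z + 1/z`. -/
lemma deriv_phase {z : ℂ} (hz : z ≠ 0) :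
    deriv (phase (-8)) z =
      (z + 1) ^ 2 * (3 * (z ^ 2 + 1) ^ 2 - 8 * (z ^ 2 + 1) * z + 2 * z ^ 2) / (2 * z ^ 4) := by
  have hi : HasDerivAt (fun w : ℂ => 1 / w) (-(z ^ 2)⁻¹) z := by
    simpa only [one_div] using hasDerivAt_inv hz
  have hw := ((hasDerivAt_id' z).sub hi).const_mul (1 / 2 : ℂ)
  have hs := (hasDerivAt_id' z).add hi
  have hq := (((hs.pow 2).const_add (((-8 : ℝ) : ℂ))).add_const 2).sub hs
  have h : HasDerivAt (phase (-8)) _ z := hw.mul hq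
  rw [h.deriv]
  simp
  field_simp
  ring

/-- For real `z ≠ 0` stationarity amounts to the vanishing of a real polynomial. -/
lemma deriv_phase_eq_zero_iff {z : ℝ} (hz : z ≠ 0) :
    deriv (phase (-8)) (z : ℂ) = 0 ↔
      z = -1 ∨ 3 * (z ^ 2 + 1) ^ 2 - 8 * (z ^ 2 + 1) * z + 2 * z ^ 2 = 0 := by
  have hz' : (z : ℂ) ≠ 0 := by exact_mod_cast hz
  have hd : (2 * (z : ℂ) ^ 4) ≠ 0 := mul_ne_zero two_ne_zero (pow_ne_zero 4 hz')
  rw [deriv_phase hz', div_eq_zero_iff, or_iff_left hd]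
  rw [mul_eq_zero, pow_eq_zero_iff two_ne_zero, ← add_eq_zero_iff_eq_neg]
  norm_cast

/-- For ξ = −8 the real stationary phase points are exactly three: the point −1 together
with two points ξ₂, ξ₁ with 0 < ξ₂ < 1 < ξ₁ and ξ₁ξ₂ = 1. -/
theorem stationary_points_case2 :
    ∃ ξ₁ ξ₂ : ℝ, 0 < ξ₂ ∧ ξ₂ < 1 ∧ 1 < ξ₁ ∧ ξ₁ * ξ₂ = 1 ∧
      {z : ℝ | z ≠ 0 ∧ deriv (phase (-8)) (z : ℂ) = 0} = {-1, ξ₂, ξ₁} := by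
  -- `s` is the larger root of `3 s² - 8 s + 2`, written `(4 + r) / 3` with `r = √10`.
  obtain ⟨r, hr3, hr⟩ : ∃ r : ℝ, 3 < r ∧ r ^ 2 = 10 :=
    ⟨√10, by rw [Real.lt_sqrt] <;> norm_num, Real.sq_sqrt (by norm_num)⟩
  have hr4 : r < 4 := by nlinarith
  obtain ⟨s, hs⟩ : ∃ s : ℝ, s = (4 + r) / 3 := ⟨_, rfl⟩
  have hs2 : 2 < s := by linarith
  obtain ⟨d, hd0, hd⟩ : ∃ d : ℝ, 0 < d ∧ d ^ 2 = s ^ 2 - 4 :=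
    ⟨√(s ^ 2 - 4), Real.sqrt_pos.2 (by nlinarith), Real.sq_sqrt (by nlinarith)⟩
  have hds : d < s := by nlinarith
  have hds2 : s - 2 < d := by nlinarith
  -- The numbers `(s ± d) / 2` are the roots of `z² - s z + 1`.
  refine ⟨(s + d) / 2, (s - d) / 2, by linarith, by linarith, by linarith,
    by linear_combination (-1 / 4) * hd, ?_⟩
  have hfac (z : ℝ) : 3 * (z ^ 2 + 1) ^ 2 - 8 * (z ^ 2 + 1) * z + 2 * z ^ 2 =
      3 * (z ^ 2 - (4 - r) / 3 * z + 1) * ((z - (s - d) / 2) * (z - (s + d) / 2)) := by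
    have h : (z - (s - d) / 2) * (z - (s + d) / 2) = z ^ 2 - s * z + 1 := by
      linear_combination (-1 / 4) * hd
    rw [h, hs]
    linear_combination (z ^ 2 / 3) * hr
  -- The quadratic belonging to the smaller root `(4 - r) / 3 ∈ (0, 1)` has no real zero.
  have hpos (z : ℝ) : 0 < z ^ 2 - (4 - r) / 3 * z + 1 := by
    nlinarith [sq_nonneg (z - (4 - r) / 6)]
  ext z
  simp only [Set.mem_ofPred_eq, Set.mem_insert_iff, Set.mem_singleton_iff]
  have key (hz : z ≠ 0) : deriv (phase (-8)) (z : ℂ) = 0 ↔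
      z = -1 ∨ z = (s - d) / 2 ∨ z = (s + d) / 2 := by
    rw [deriv_phase_eq_zero_iff hz, hfac, mul_eq_zero,
      or_iff_right (mul_pos three_pos (hpos z)).ne', mul_eq_zero, sub_eq_zero, sub_eq_zero]
  refine ⟨fun h => (key h.1).1 h.2, fun h => ?_⟩
  have hz : z ≠ 0 := by
    rcases h with h | h | h
    · rw [h]; norm_num
    · exact (by linarith : 0 < z).ne'
    · exact (by linarith : 0 < z).ne'
  exact ⟨hz, (key hz).2 h⟩
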